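/- 𝓗 equals the set of all (x, X, y, Y₁₂) for which there exists α ∈ ℝ² such that (x, X, y, Y₁₂, α) satisfies the linear conditions (L) and the single PSD condition (P5). -/

import Mathlib

open Matrix

set_option linter.unusedVariables false

/-- Linear conditions (L). -/
def Lcond (x1 x2 X11 X12 X22 y1 y2 Y12 a1 a2 : ℝ) : Prop :=
  X11 ≤ x1 ∧ x1 ≤ y1 ∧ X22 ≤ x2 ∧ x2 ≤ y2 ∧
  max 0 (x1 - a1 + x2 - a2 - Y12) ≤ X12 ∧ X12 ≤ min (x1 - a1) (x2 - a2) ∧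
  0 ≤ a1 ∧ a1 ≤ y1 - Y12 ∧ 0 ≤ a2 ∧ a2 ≤ y2 - Y12 ∧
  max 0 (y1 + y2 - 1) ≤ Y12 ∧ Y12 ≤ min y1 y2

/-- PSD condition (P3). -/
def P3cond (x1 x2 X11 X12 X22 y1 y2 Y12 a1 a2 : ℝ) : Prop :=
  (!![Y12, x1 - a1, x2 - a2;
      x1 - a1, x1 - a1, X12;
      x2 - a2, X12, x2 - a2] : Matrix (Fin 3) (Fin 3) ℝ).PosSemidef

/-- PSD condition (P4a). -/
def P4acond (x1 x2 X11 X12 X22 y1 y2 Y12 a1 a2 : ℝ) : Prop :=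
  (!![y1 - Y12, 0, a1, 0;
      0, Y12, x1 - a1, x2 - a2;
      a1, x1 - a1, X11, X12;
      0, x2 - a2, X12, x2 - a2] : Matrix (Fin 4) (Fin 4) ℝ).PosSemidef

/-- PSD condition (P4b). -/
def P4bcond (x1 x2 X11 X12 X22 y1 y2 Y12 a1 a2 : ℝ) : Prop :=
  (!![y2 - Y12, 0, 0, a2;
      0, Y12, x1 - a1, x2 - a2;
      0, x1 - a1, x1 - a1, X12;
      a2, x2 - a2, X12, X22] : Matrix (Fin 4) (Fin 4) ℝ).PosSemidef

/-- PSD condition (P5). -/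
def P5cond (x1 x2 X11 X12 X22 y1 y2 Y12 a1 a2 : ℝ) : Prop :=
  (!![y1 - Y12, 0, 0, a1, 0;
      0, y2 - Y12, 0, 0, a2;
      0, 0, Y12, x1 - a1, x2 - a2;
      a1, 0, x1 - a1, X11, X12;
      0, a2, x2 - a2, X12, X22] : Matrix (Fin 5) (Fin 5) ℝ).PosSemidef

/-- 𝓗 = conv{(x, xxᵀ, y, y₁y₂) : 0 ≤ x ≤ y, y ∈ {0,1}²}. -/
def Hset : Set ((Fin 2 → ℝ) × Matrix (Fin 2) (Fin 2) ℝ × (Fin 2 → ℝ) × ℝ) :=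
  convexHull ℝ {p | ∃ x y : Fin 2 → ℝ,
    (∀ i, 0 ≤ x i) ∧ (∀ i, x i ≤ y i) ∧ (∀ i, y i = 0 ∨ y i = 1) ∧
    p = (x, Matrix.vecMulVec x x, y, y 0 * y 1)}


/-- Scalar version of membership in `Hset`. -/
def Hs (x1 x2 X11 X12 X22 y1 y2 Y : ℝ) : Prop :=
  ((![x1, x2], !![X11, X12; X12, X22], ![y1, y2], Y) :
    (Fin 2 → ℝ) × Matrix (Fin 2) (Fin 2) ℝ × (Fin 2 → ℝ) × ℝ) ∈ Hset

lemma Hs_gen {x1 x2 y1 y2 : ℝ} (h1 : 0 ≤ x1) (h2 : 0 ≤ x2) (h3 : x1 ≤ y1) (h4 : x2 ≤ y2)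
    (h5 : y1 = 0 ∨ y1 = 1) (h6 : y2 = 0 ∨ y2 = 1) :
    Hs x1 x2 (x1 ^ 2) (x1 * x2) (x2 ^ 2) y1 y2 (y1 * y2) := by
  apply subset_convexHull
  refine ⟨![x1, x2], ![y1, y2], ?_, ?_, ?_, ?_⟩
  · intro i; fin_cases i <;> simp [h1, h2]
  · intro i; fin_cases i <;> simp [h3, h4]
  · intro i; fin_cases i <;> simp [h5, h6]
  · simp only [Prod.mk.injEq, true_and]
    refine ⟨?_, by simp⟩
    ext i j
    fin_cases i <;> fin_cases j <;> simp [Matrix.vecMulVec_apply, pow_two, mul_comm]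

lemma Hs_comb {x1 x2 X11 X12 X22 y1 y2 Y x1' x2' X11' X12' X22' y1' y2' Y' : ℝ}
    (h : Hs x1 x2 X11 X12 X22 y1 y2 Y) (h' : Hs x1' x2' X11' X12' X22' y1' y2' Y')
    {a b : ℝ} (ha : 0 ≤ a) (hb : 0 ≤ b) (hab : a + b = 1) :
    Hs (a * x1 + b * x1') (a * x2 + b * x2') (a * X11 + b * X11') (a * X12 + b * X12')
      (a * X22 + b * X22') (a * y1 + b * y1') (a * y2 + b * y2') (a * Y + b * Y') := by
  have := (convex_convexHull ℝ _) h h' ha hb hab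
  unfold Hs Hset
  convert this using 1
  simp only [Prod.smul_mk, Prod.mk_add_mk, Prod.mk.injEq]
  refine ⟨?_, ?_, ?_, ?_⟩
  · ext i; fin_cases i <;> simp
  · ext i j; fin_cases i <;> fin_cases j <;> simp
  · ext i; fin_cases i <;> simp
  · simp

/-- Two-point combination with prescribed target. -/
lemma Hs_comb_eq {x1 x2 X11 X12 X22 y1 y2 Y x1' x2' X11' X12' X22' y1' y2' Y' : ℝ}
    (h : Hs x1 x2 X11 X12 X22 y1 y2 Y) (h' : Hs x1' x2' X11' X12' X22' y1' y2' Y')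
    (a : ℝ) (ha : 0 ≤ a) (hb : a ≤ 1) {z1 z2 Z11 Z12 Z22 w1 w2 W : ℝ}
    (e1 : z1 = a * x1 + (1 - a) * x1') (e2 : z2 = a * x2 + (1 - a) * x2')
    (e3 : Z11 = a * X11 + (1 - a) * X11') (e4 : Z12 = a * X12 + (1 - a) * X12')
    (e5 : Z22 = a * X22 + (1 - a) * X22') (e6 : w1 = a * y1 + (1 - a) * y1')
    (e7 : w2 = a * y2 + (1 - a) * y2') (e8 : W = a * Y + (1 - a) * Y') :
    Hs z1 z2 Z11 Z12 Z22 w1 w2 W := by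
  subst e1 e2 e3 e4 e5 e6 e7 e8
  exact Hs_comb h h' ha (by linarith) (by ring)

lemma exists_weight {l m r : ℝ} (h1 : l ≤ m) (h2 : m ≤ r) :
    ∃ a : ℝ, 0 ≤ a ∧ a ≤ 1 ∧ m = a * l + (1 - a) * r := by
  rcases eq_or_lt_of_le (h1.trans h2) with h | h
  · exact ⟨1, by norm_num, le_refl _, by linarith⟩
  · have : 0 < r - l := by linarith
    refine ⟨(r - m) / (r - l), by apply div_nonneg <;> linarith, ?_, ?_⟩
    · rw [div_le_one this]; linarith
    · field_simp; ring

lemma Hs_seg1 {x1 x2 X11 X11' T X12 X22 y1 y2 Y : ℝ}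
    (h : Hs x1 x2 X11 X12 X22 y1 y2 Y) (h' : Hs x1 x2 X11' X12 X22 y1 y2 Y)
    (h1 : X11 ≤ T) (h2 : T ≤ X11') : Hs x1 x2 T X12 X22 y1 y2 Y := by
  obtain ⟨a, ha, hb, e⟩ := exists_weight h1 h2
  exact Hs_comb_eq h h' a ha hb (by ring) (by ring) e (by ring) (by ring) (by ring) (by ring)
    (by ring)

lemma Hs_seg2 {x1 x2 X11 S X12 X22 X22' y1 y2 Y : ℝ}
    (h : Hs x1 x2 X11 X12 X22 y1 y2 Y) (h' : Hs x1 x2 X11 X12 X22' y1 y2 Y)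
    (h1 : X22 ≤ S) (h2 : S ≤ X22') : Hs x1 x2 X11 X12 S y1 y2 Y := by
  obtain ⟨a, ha, hb, e⟩ := exists_weight h1 h2
  exact Hs_comb_eq h h' a ha hb (by ring) (by ring) (by ring) (by ring) e (by ring) (by ring)
    (by ring)

lemma Hs_pt {u v : ℝ} (h1 : 0 ≤ u) (h2 : u ≤ 1) (h3 : 0 ≤ v) (h4 : v ≤ 1) :
    Hs u v (u ^ 2) (u * v) (v ^ 2) 1 1 1 := by
  have := Hs_gen h1 h3 h2 h4 (Or.inr rfl) (Or.inr rfl)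
  simpa using this

/-- One-dimensional piece with `y = (1,0)`. -/
lemma Hs_10 {m s : ℝ} (h0 : 0 ≤ m) (h1 : m ^ 2 ≤ s) (h2 : s ≤ m) : Hs m 0 s 0 0 1 0 0 := by
  have hm : m ≤ 1 := by nlinarith
  have A : ∀ v : ℝ, 0 ≤ v → v ≤ 1 → Hs v 0 (v ^ 2) 0 0 1 0 0 := by
    intro v hv hv'
    have := Hs_gen hv le_rfl hv' le_rfl (Or.inr rfl) (Or.inl rfl)
    simpa using this
  refine Hs_seg1 (A m h0 hm) (X11' := m) ?_ h1 h2
  exact Hs_comb_eq (A 1 (by norm_num) le_rfl) (A 0 le_rfl (by norm_num)) m h0 hm (by ring)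
    (by ring) (by ring) (by ring) (by ring) (by ring) (by ring) (by ring)

/-- One-dimensional piece with `y = (0,1)`. -/
lemma Hs_01 {m s : ℝ} (h0 : 0 ≤ m) (h1 : m ^ 2 ≤ s) (h2 : s ≤ m) : Hs 0 m 0 0 s 0 1 0 := by
  have hm : m ≤ 1 := by nlinarith
  have A : ∀ v : ℝ, 0 ≤ v → v ≤ 1 → Hs 0 v 0 0 (v ^ 2) 0 1 0 := by
    intro v hv hv'
    have := Hs_gen le_rfl hv le_rfl hv' (Or.inl rfl) (Or.inr rfl)
    simpa using this
  refine Hs_seg2 (A m h0 hm) (X22' := m) ?_ h1 h2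
  exact Hs_comb_eq (A 1 (by norm_num) le_rfl) (A 0 le_rfl (by norm_num)) m h0 hm (by ring)
    (by ring) (by ring) (by ring) (by ring) (by ring) (by ring) (by ring)

lemma Hs_00 : Hs 0 0 0 0 0 0 0 0 := by
  have := Hs_gen (x1 := 0) (x2 := 0) le_rfl le_rfl le_rfl le_rfl (Or.inl rfl) (Or.inl rfl)
  simpa using this

/-- Product-type points: `V` constant, `U` with second moment `t`. -/
lemma Hs_const2 {u v t : ℝ} (h1 : 0 ≤ u) (h2 : u ≤ 1) (h3 : 0 ≤ v) (h4 : v ≤ 1)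
    (h5 : u ^ 2 ≤ t) (h6 : t ≤ u) : Hs u v t (u * v) (v ^ 2) 1 1 1 := by
  refine Hs_seg1 (Hs_pt h1 h2 h3 h4) (X11' := u) ?_ h5 h6
  exact Hs_comb_eq (Hs_pt (u := 1) (by norm_num) le_rfl h3 h4) (Hs_pt (u := 0) le_rfl (by norm_num) h3 h4)
    u h1 h2 (by ring)
    (by ring) (by ring) (by ring) (by ring) (by ring) (by ring) (by ring)

lemma Hs_const1 {u v s : ℝ} (h1 : 0 ≤ u) (h2 : u ≤ 1) (h3 : 0 ≤ v) (h4 : v ≤ 1)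
    (h5 : v ^ 2 ≤ s) (h6 : s ≤ v) : Hs u v (u ^ 2) (u * v) s 1 1 1 := by
  refine Hs_seg2 (Hs_pt h1 h2 h3 h4) (X22' := v) ?_ h5 h6
  exact Hs_comb_eq (Hs_pt (v := 1) h1 h2 (by norm_num) le_rfl) (Hs_pt (v := 0) h1 h2 le_rfl (by norm_num))
    v h3 h4 (by ring)
    (by ring) (by ring) (by ring) (by ring) (by ring) (by ring) (by ring)

/-- corner distributions -/
lemma Hs_corner {u v c : ℝ} (h0 : 0 ≤ c) (h1 : c ≤ u) (h2 : c ≤ v) (h3 : u + v - 1 ≤ c)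
    (hu0 : 0 < u) (hu1 : u < 1) :
    Hs u v u c v 1 1 1 := by
  have q : 0 < 1 - u := by linarith
  have A : Hs 1 (c / u) 1 (c / u) (c / u) 1 1 1 := by
    have a0 : 0 ≤ c / u := by positivity
    have a1 : c / u ≤ 1 := by rw [div_le_one hu0]; exact h1
    have := Hs_const1 (u := 1) (by norm_num) le_rfl a0 a1 (s := c / u) (by nlinarith) le_rfl
    simpa using this
  have B : Hs 0 ((v - c) / (1 - u)) 0 0 ((v - c) / (1 - u)) 1 1 1 := by
    have a0 : 0 ≤ (v - c) / (1 - u) := by apply div_nonneg <;> linarith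
    have a1 : (v - c) / (1 - u) ≤ 1 := by rw [div_le_one q]; linarith
    have := Hs_const1 (u := 0) le_rfl (by norm_num) a0 a1 (s := (v - c) / (1 - u)) (by nlinarith) le_rfl
    simpa using this
  refine Hs_comb_eq A B u hu0.le hu1.le (by ring) ?_ (by ring) ?_ ?_ (by ring) (by ring) (by ring)
  all_goals field_simp
  all_goals ring

/-- `t = u1` face. -/
lemma Hs_face {u v c s : ℝ} (h0 : 0 ≤ c) (h1 : c ≤ u) (h2 : c ≤ v) (h3 : u + v - 1 ≤ c)
    (hs : v ^ 2 ≤ s) (hs' : s ≤ v) (hd : (c - u * v) ^ 2 ≤ (u - u ^ 2) * (s - v ^ 2)) :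
    Hs u v u c s 1 1 1 := by
  have hu0 : 0 ≤ u := by linarith
  have hu1 : u ≤ 1 := by linarith
  have hv0 : 0 ≤ v := by linarith
  have hv1 : v ≤ 1 := by linarith
  rcases eq_or_lt_of_le hu0 with h | hu0'
  · have hc : c = 0 := by linarith
    subst h hc
    have := Hs_const1 (u := 0) le_rfl (by norm_num) hv0 hv1 hs hs'
    simpa using this
  rcases eq_or_lt_of_le hu1 with h | hu1'
  · have hc : c = v := by linarith
    subst h hc
    have := Hs_const1 (u := 1) (by norm_num) le_rfl hv0 hv1 hs hs'
    simpa using this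
  have q : 0 < 1 - u := by linarith
  have a0 : 0 ≤ c / u := by positivity
  have a1 : c / u ≤ 1 := by rw [div_le_one hu0']; exact h1
  have b0 : 0 ≤ (v - c) / (1 - u) := by apply div_nonneg <;> linarith
  have b1 : (v - c) / (1 - u) ≤ 1 := by rw [div_le_one q]; linarith
  refine Hs_seg2 (X22 := v ^ 2 + (c - u * v) ^ 2 / (u - u ^ 2)) ?_
    (Hs_corner h0 h1 h2 h3 hu0' hu1') ?_ hs'
  · have e : u - u ^ 2 = u * (1 - u) := by ring
    rw [e]
    refine Hs_comb_eq (Hs_pt (u := 1) (by norm_num) le_rfl a0 a1)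
      (Hs_pt (u := 0) le_rfl (by norm_num) b0 b1) u hu0 hu1
      (by ring) ?_ (by ring) ?_ ?_ (by ring) (by ring) (by ring)
    all_goals field_simp
    all_goals ring
  · have : 0 < u - u ^ 2 := by nlinarith
    have : (c - u * v) ^ 2 / (u - u ^ 2) ≤ s - v ^ 2 := by
      rw [div_le_iff₀ this]; linarith
    linarith

/-- points on a line -/
lemma Hs_line0 {u v s k l r : ℝ} (hs : v ^ 2 < s) (hs' : s ≤ (r + l) * v - r * l)
    (hl : l ≤ v) (hr : v ≤ r) (l0 : 0 ≤ l) (r1 : r ≤ 1)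
    (a1 : 0 ≤ u + k * (l - v)) (a2 : u + k * (l - v) ≤ 1)
    (a3 : 0 ≤ u + k * (r - v)) (a4 : u + k * (r - v) ≤ 1)
    (hu0 : 0 ≤ u) (hu1 : u ≤ 1) :
    Hs u v (u ^ 2 + k ^ 2 * (s - v ^ 2)) (u * v + k * (s - v ^ 2)) s 1 1 1 := by
  have A := Hs_pt (u := u) (v := v) hu0 hu1 (by linarith) (by linarith)
  have L := Hs_pt a1 a2 l0 (by linarith)
  have R := Hs_pt a3 a4 (by linarith) r1
  obtain ⟨a, ha, hb, e⟩ := exists_weight hl hr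
  set S := (r + l) * v - r * l with hS
  have e' : S = a * l ^ 2 + (1 - a) * r ^ 2 := by rw [hS, e]; ring
  have B : Hs u v (u ^ 2 + k ^ 2 * (S - v ^ 2)) (u * v + k * (S - v ^ 2)) S 1 1 1 := by
    refine Hs_comb_eq L R a ha hb ?_ e ?_ ?_ e' (by ring) (by ring) (by ring)
    · rw [e]; ring
    · rw [e', e]; ring
    · rw [e', e]; ring
  obtain ⟨b, hb0, hb1, eb⟩ := exists_weight hs.le hs'
  refine Hs_comb_eq A B b hb0 hb1 (by ring) (by ring) ?_ ?_ eb (by ring) (by ring) (by ring)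
  · rw [eb]; ring
  · rw [eb]; ring

lemma sq_le_of_unit {v : ℝ} (h0 : 0 ≤ v) (h1 : v ≤ 1) : v ^ 2 ≤ v := by nlinarith

lemma Hs_line {u v s k : ℝ} (hs : v ^ 2 < s) (hs' : s ≤ v)
    (hu0 : 0 ≤ u) (hu1 : u ≤ 1)
    (ht : u ^ 2 + k ^ 2 * (s - v ^ 2) ≤ u)
    (h0 : 0 ≤ u * v + k * (s - v ^ 2)) (h1 : u * v + k * (s - v ^ 2) ≤ u)
    (h2 : u * v + k * (s - v ^ 2) ≤ v) (h3 : u + v - 1 ≤ u * v + k * (s - v ^ 2)) :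
    Hs u v (u ^ 2 + k ^ 2 * (s - v ^ 2)) (u * v + k * (s - v ^ 2)) s 1 1 1 := by
  have hv0 : 0 ≤ v := by nlinarith
  have hv1 : v ≤ 1 := by nlinarith
  rcases lt_trichotomy k 0 with hk | hk | hk
  · obtain ⟨j, hj, rfl⟩ : ∃ j : ℝ, 0 < j ∧ k = -j := ⟨-k, by linarith, by ring⟩
    have f1 : j * ((1 - u) / j) = 1 - u := by field_simp
    have f2 : j * (u / j) = u := by field_simp
    have p1 : 0 ≤ (1 - u) / j := by apply div_nonneg <;> linarith
    have p2 : 0 ≤ u / j := by positivity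
    generalize (1 - u) / j = A at *
    generalize u / j = B at *
    have g1 : 0 ≤ j * v := by positivity
    have g2 : 0 ≤ j * (1 - v) := mul_nonneg hj.le (by linarith)
    have f1v : (j * A) * v = (1 - u) * v := by rw [f1]
    have f2v : (j * B) * v = u * v := by rw [f2]
    have fAB : (j * A) * (j * B) = (1 - u) * u := by rw [f1, f2]
    rcases le_total 0 (v - A) with c1 | c1 <;> rcases le_total 1 (v + B) with c2 | c2 <;>
      have d1 := mul_le_mul_of_nonneg_left c1 hj.le <;>
      have d2 := mul_le_mul_of_nonneg_left c2 hj.le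
    · refine Hs_line0 (l := v - A) (r := 1) hs ?_ ?_ ?_ ?_ ?_ ?_ ?_ ?_ ?_ hu0 hu1 <;> try linarith
      exact le_of_mul_le_mul_left (by linarith) hj
    · refine Hs_line0 (l := v - A) (r := v + B) hs ?_ ?_ ?_ ?_ ?_ ?_ ?_ ?_ ?_ hu0 hu1 <;> try linarith
      exact le_of_mul_le_mul_left (by linarith) (mul_pos hj hj)
    · refine Hs_line0 (l := 0) (r := 1) hs ?_ ?_ ?_ ?_ ?_ ?_ ?_ ?_ ?_ hu0 hu1 <;> try linarith
    · refine Hs_line0 (l := 0) (r := v + B) hs ?_ ?_ ?_ ?_ ?_ ?_ ?_ ?_ ?_ hu0 hu1 <;> try linarith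
      exact le_of_mul_le_mul_left (by linarith) hj
  · subst hk
    refine Hs_line0 (l := 0) (r := 1) hs ?_ ?_ ?_ ?_ ?_ ?_ ?_ ?_ ?_ hu0 hu1 <;> linarith
  · have f1 : k * ((1 - u) / k) = 1 - u := by field_simp
    have f2 : k * (u / k) = u := by field_simp
    have p1 : 0 ≤ (1 - u) / k := by apply div_nonneg <;> linarith
    have p2 : 0 ≤ u / k := by positivity
    generalize (1 - u) / k = A at *
    generalize u / k = B at *
    have g1 : 0 ≤ k * v := by positivity
    have g2 : 0 ≤ k * (1 - v) := mul_nonneg hk.le (by linarith)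
    have f1v : (k * A) * v = (1 - u) * v := by rw [f1]
    have f2v : (k * B) * v = u * v := by rw [f2]
    have fAB : (k * A) * (k * B) = (1 - u) * u := by rw [f1, f2]
    rcases le_total 0 (v - B) with c1 | c1 <;> rcases le_total 1 (v + A) with c2 | c2 <;>
      have d1 := mul_le_mul_of_nonneg_left c1 hk.le <;>
      have d2 := mul_le_mul_of_nonneg_left c2 hk.le
    · refine Hs_line0 (l := v - B) (r := 1) hs ?_ ?_ ?_ ?_ ?_ ?_ ?_ ?_ ?_ hu0 hu1 <;> try linarith
      exact le_of_mul_le_mul_left (by linarith) hk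
    · refine Hs_line0 (l := v - B) (r := v + A) hs ?_ ?_ ?_ ?_ ?_ ?_ ?_ ?_ ?_ hu0 hu1 <;> try linarith
      exact le_of_mul_le_mul_left (by linarith) (mul_pos hk hk)
    · refine Hs_line0 (l := 0) (r := 1) hs ?_ ?_ ?_ ?_ ?_ ?_ ?_ ?_ ?_ hu0 hu1 <;> try linarith
    · refine Hs_line0 (l := 0) (r := v + A) hs ?_ ?_ ?_ ?_ ?_ ?_ ?_ ?_ ?_ hu0 hu1 <;> try linarith
      exact le_of_mul_le_mul_left (by linarith) hk

/-- PSD + RLT description of the hull of the box. -/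
lemma Hs_box {u v t c s : ℝ} (h0 : 0 ≤ c) (h1 : c ≤ u) (h2 : c ≤ v) (h3 : u + v - 1 ≤ c)
    (ht : u ^ 2 ≤ t) (ht' : t ≤ u) (hs : v ^ 2 ≤ s) (hs' : s ≤ v)
    (hd : (c - u * v) ^ 2 ≤ (t - u ^ 2) * (s - v ^ 2)) :
    Hs u v t c s 1 1 1 := by
  have hu0 : 0 ≤ u := by linarith
  have hu1 : u ≤ 1 := by linarith
  have hv0 : 0 ≤ v := by linarith
  have hv1 : v ≤ 1 := by linarith
  rcases eq_or_lt_of_le hs with h | h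
  · have hc : c = u * v := by
      have : (c - u * v) ^ 2 ≤ 0 := by rw [← h] at hd; linarith
      have := pow_eq_zero_iff (two_ne_zero) |>.1 (le_antisymm this (sq_nonneg _))
      linarith
    rw [hc, ← h]
    exact Hs_const2 hu0 hu1 hv0 hv1 ht ht'
  · have hp : 0 < s - v ^ 2 := by linarith
    obtain ⟨k, hk⟩ : ∃ k, k * (s - v ^ 2) = c - u * v := ⟨(c - u * v) / (s - v ^ 2), by field_simp⟩
    have hc : c = u * v + k * (s - v ^ 2) := by linarith
    have hkt : k ^ 2 * (s - v ^ 2) ≤ t - u ^ 2 := by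
      rw [← hk] at hd
      have : k ^ 2 * (s - v ^ 2) * (s - v ^ 2) ≤ (t - u ^ 2) * (s - v ^ 2) := by nlinarith
      exact le_of_mul_le_mul_right this hp
    refine Hs_seg1 (X11 := u ^ 2 + k ^ 2 * (s - v ^ 2)) (X11' := u) ?_ ?_ (by linarith) ht'
    · have := Hs_line (u := u) (k := k) h hs' hu0 hu1 (by linarith) (by linarith) (by linarith)
        (by linarith) (by linarith)
      rwa [← hc] at this
    · refine Hs_face h0 h1 h2 h3 hs hs' (hd.trans ?_)
      exact mul_le_mul_of_nonneg_right (by linarith) hp.le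

lemma up_ok {a c p L x X u v : ℝ} (ha0 : 0 ≤ a) (hca : c ≤ a) (hp0 : 0 ≤ p) (hL : 0 < L)
    (huv : u ≤ v) (hv0' : 0 ≤ v) (hv1' : v ≤ 1) (hvx : v ≤ x) (hav : a * v ≤ c)
    (hv3 : L * (X - v) - (x - v) ^ 2 = 0)
    (hP : L * (c - a * u) ^ 2 ≤ p * (L * X - (x - u) ^ 2 - L * u ^ 2)) :
    (c - a * v) ^ 2 ≤ p * (v - v ^ 2) := by
  by_contra hcon
  push Not at hcon
  obtain ⟨d, hd⟩ : ∃ d, d = c - a * v := ⟨_, rfl⟩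
  obtain ⟨δ, hδ⟩ : ∃ δ, δ = v - u := ⟨_, rfl⟩
  have hd0 : 0 ≤ d := by linarith
  have hδ0 : 0 ≤ δ := by linarith
  rw [← hd] at hcon
  have hdpos : 0 < d := by
    rcases eq_or_lt_of_le hd0 with h | h
    · exfalso
      rw [← h] at hcon
      have : 0 ≤ p * (v - v ^ 2) := mul_nonneg hp0 (by linarith [sq_le_of_unit hv0' hv1'])
      linarith
    · exact h
  have k1 : L * (d + a * δ) ^ 2 ≤ L * (p * (v - u ^ 2)) := by
    have e1 : c - a * u = d + a * δ := by rw [hd, hδ]; ring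
    rw [e1] at hP
    have e2 : L * X - (x - u) ^ 2 - L * u ^ 2 ≤ L * (v - u ^ 2) := by
      nlinarith [mul_nonneg hδ0 (sub_nonneg.2 hvx), sq_nonneg δ]
    have := mul_le_mul_of_nonneg_left e2 hp0
    linarith
  have k2 := le_of_mul_le_mul_left k1 hL
  have e3 : v - u ^ 2 = v - v ^ 2 + 2 * v * δ - δ ^ 2 := by rw [hδ]; ring
  rw [e3] at k2
  have k3 : 2 * δ * (a * d) < 2 * δ * (p * v) := by
    nlinarith [mul_nonneg hp0 (sq_nonneg δ), sq_nonneg (a * δ)]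
  have k4 : a * d < p * v := lt_of_mul_lt_mul_left k3 (by linarith)
  have k5 : d * (a * (1 - v)) < d * d := by
    nlinarith [mul_le_mul_of_nonneg_right k4.le (sub_nonneg.2 hv1')]
  have k6 := lt_of_mul_lt_mul_left k5 hd0
  linarith

lemma down_ok {a c p L x X u v : ℝ} (ha0 : 0 ≤ a) (hc0 : 0 ≤ c) (hp0 : 0 ≤ p) (hL : 0 < L)
    (hvu : v ≤ u) (hv0' : 0 ≤ v) (hv1' : v ≤ 1) (hvx : x - L ≤ v) (hav : c ≤ a * v)
    (hv3 : L * (X - v) - (x - v) ^ 2 = 0)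
    (hP : L * (c - a * u) ^ 2 ≤ p * (L * X - (x - u) ^ 2 - L * u ^ 2)) :
    (c - a * v) ^ 2 ≤ p * (v - v ^ 2) := by
  by_contra hcon
  push Not at hcon
  obtain ⟨d, hd⟩ : ∃ d, d = a * v - c := ⟨_, rfl⟩
  obtain ⟨δ, hδ⟩ : ∃ δ, δ = u - v := ⟨_, rfl⟩
  have hd0 : 0 ≤ d := by linarith
  have hδ0 : 0 ≤ δ := by linarith
  have ed : (c - a * v) ^ 2 = d ^ 2 := by rw [hd]; ring
  rw [ed] at hcon
  have hdpos : 0 < d := by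
    rcases eq_or_lt_of_le hd0 with h | h
    · exfalso
      rw [← h] at hcon
      have : 0 ≤ p * (v - v ^ 2) := mul_nonneg hp0 (by linarith [sq_le_of_unit hv0' hv1'])
      linarith
    · exact h
  have k1 : L * (d + a * δ) ^ 2 ≤ L * (p * (v + 2 * δ - u ^ 2)) := by
    have e1 : (c - a * u) ^ 2 = (d + a * δ) ^ 2 := by rw [hd, hδ]; ring
    rw [e1] at hP
    have e2 : L * X - (x - u) ^ 2 - L * u ^ 2 ≤ L * (v + 2 * δ - u ^ 2) := by
      have : δ * (x - v) ≤ δ * L := mul_le_mul_of_nonneg_left (by linarith) hδ0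
      have e5 : u = v + δ := by linarith
      rw [e5]; nlinarith [sq_nonneg δ]
    have := mul_le_mul_of_nonneg_left e2 hp0
    linarith
  have k2 := le_of_mul_le_mul_left k1 hL
  have e3 : v + 2 * δ - u ^ 2 = v - v ^ 2 + 2 * δ * (1 - v) - δ ^ 2 := by rw [hδ]; ring
  rw [e3] at k2
  have k3 : 2 * δ * (a * d) < 2 * δ * (p * (1 - v)) := by
    nlinarith [mul_nonneg hp0 (sq_nonneg δ), sq_nonneg (a * δ)]
  have k4 : a * d < p * (1 - v) := lt_of_mul_lt_mul_left k3 (by linarith)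
  have k5 : d * (a * v) < d * d := by
    nlinarith [mul_le_mul_of_nonneg_right k4.le hv0']
  have k6 := lt_of_mul_lt_mul_left k5 hd0
  linarith

/-- The key step: shifting the second coordinate. -/
lemma move {a t c u x X L : ℝ} (ht : a ^ 2 ≤ t) (ht' : t ≤ a) (hc0 : 0 ≤ c) (hca : c ≤ a)
    (hcu : c ≤ u) (hu : u ≤ 1 + c - a) (hL : 0 < L) (hx0 : 0 ≤ x - u) (hxL : x - u ≤ L)
    (hX : X ≤ x) (hG : (x - u) ^ 2 ≤ L * (X - u))
    (hP : L * (c - a * u) ^ 2 ≤ (t - a ^ 2) * (L * X - (x - u) ^ 2 - L * u ^ 2)) :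
    ∃ v, 0 ≤ x - v ∧ x - v ≤ L ∧ (x - v) ^ 2 ≤ L * (X - v) ∧ c ≤ v ∧ v ≤ 1 + c - a ∧
      (c - a * v) ^ 2 ≤ (t - a ^ 2) * (v - v ^ 2) := by
  have ha0 : 0 ≤ a := by linarith
  have ha1 : a ≤ 1 := by nlinarith
  have hu1 : u ≤ 1 := by linarith
  have hu0 : 0 ≤ u := by linarith
  have hcont : Continuous (fun v : ℝ => L * (X - v) - (x - v) ^ 2) := by fun_prop
  obtain ⟨p, hp⟩ : ∃ p, p = t - a ^ 2 := ⟨_, rfl⟩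
  have hp0 : 0 ≤ p := by linarith
  rw [← hp] at hP ⊢
  by_cases hk : (c - a * u) ^ 2 ≤ p * (u - u ^ 2)
  · exact ⟨u, hx0, hxL, hG, hcu, hu, hk⟩
  rcases eq_or_lt_of_le ha0 with h | hapos
  · exfalso
    apply hk
    have hc : c = 0 := by linarith
    have : 0 ≤ p * (u - u ^ 2) := mul_nonneg hp0 (by linarith [sq_le_of_unit hu0 hu1])
    rw [hc, ← h]; simpa using this
  obtain ⟨w, hw⟩ : ∃ w, a * w = c := ⟨c / a, by field_simp⟩
  have hw1 : w ≤ 1 := by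
    by_contra hcon; push Not at hcon; nlinarith
  have hw0 : 0 ≤ w := by
    by_contra hcon; push Not at hcon; nlinarith
  have hcw : c ≤ w := by nlinarith
  have hwu : w ≤ 1 + c - a := by nlinarith [mul_nonneg (sub_nonneg.2 ha1) (sub_nonneg.2 hw1)]
  have hkw : (c - a * w) ^ 2 ≤ p * (w - w ^ 2) := by
    rw [hw, sub_self]
    have : 0 ≤ p * (w - w ^ 2) := mul_nonneg hp0 (by linarith [sq_le_of_unit hw0 hw1])
    simpa using this
  rcases le_total u w with huw | hwu'
  ·
    by_cases hfin : w ≤ x ∧ 0 ≤ L * (X - w) - (x - w) ^ 2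
    · exact ⟨w, by linarith, by linarith, by linarith, hcw, hwu, hkw⟩
    obtain ⟨e, he1, he2, he3, he4⟩ : ∃ e, u ≤ e ∧ e ≤ w ∧ e ≤ x ∧
        L * (X - e) - (x - e) ^ 2 ≤ 0 := by
      rcases le_total w x with h | h
      · refine ⟨w, huw, le_rfl, h, ?_⟩
        by_contra hcon; push Not at hcon; exact hfin ⟨h, hcon.le⟩
      · refine ⟨x, by linarith, h, le_rfl, ?_⟩
        nlinarith
    obtain ⟨v, ⟨hv1, hv2⟩, hv3⟩ := intermediate_value_Icc' he1 hcont.continuousOn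
      (show (0 : ℝ) ∈ Set.Icc _ _ from ⟨he4, by linarith⟩)
    simp only at hv3
    refine ⟨v, by linarith, by linarith, by linarith, by linarith, by linarith, ?_⟩
    exact up_ok ha0 hca hp0 hL hv1 (by linarith) (by linarith) (by linarith)
      (by rw [← hw]; exact mul_le_mul_of_nonneg_left (by linarith) ha0) hv3 hP
  ·
    by_cases hfin : x - L ≤ w ∧ 0 ≤ L * (X - w) - (x - w) ^ 2
    · exact ⟨w, by linarith, by linarith, by linarith, hcw, hwu, hkw⟩
    obtain ⟨e, he1, he2, he3, he4⟩ : ∃ e, e ≤ u ∧ w ≤ e ∧ x - L ≤ e ∧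
        L * (X - e) - (x - e) ^ 2 ≤ 0 := by
      rcases le_total (x - L) w with h | h
      · refine ⟨w, hwu', le_rfl, h, ?_⟩
        by_contra hcon; push Not at hcon; exact hfin ⟨h, hcon.le⟩
      · refine ⟨x - L, by linarith, h, le_rfl, ?_⟩
        nlinarith
    obtain ⟨v, ⟨hv1, hv2⟩, hv3⟩ := intermediate_value_Icc he1 hcont.continuousOn
      (show (0 : ℝ) ∈ Set.Icc _ _ from ⟨he4, by linarith⟩)
    simp only at hv3
    refine ⟨v, by linarith, by linarith, by linarith, by linarith, by linarith, ?_⟩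
    exact down_ok ha0 hc0 hp0 hL hv2 (by linarith) (by linarith) (by linarith)
      (by rw [← hw]; exact mul_le_mul_of_nonneg_left (by linarith) ha0) hv3 hP

/-- McCormick implies the Bernoulli moment matrix is PSD. -/
lemma corner_det {u v c : ℝ} (h0 : 0 ≤ c) (h1 : c ≤ u) (h2 : c ≤ v) (h3 : u + v - 1 ≤ c) :
    (c - u * v) ^ 2 ≤ (u - u ^ 2) * (v - v ^ 2) := by
  have A : 0 ≤ (1 - u - v + c) := by linarith
  obtain ⟨p, hp⟩ : ∃ p, p = u - c := ⟨_, rfl⟩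
  obtain ⟨q, hq⟩ : ∃ q, q = v - c := ⟨_, rfl⟩
  obtain ⟨r, hr⟩ : ∃ r, r = 1 - u - v + c := ⟨_, rfl⟩
  have hp0 : 0 ≤ p := by linarith
  have hq0 : 0 ≤ q := by linarith
  have hr0 : 0 ≤ r := by linarith
  have eu : u = c + p := by linarith
  have ev : v = c + q := by linarith
  have e1 : u - u ^ 2 = (c + p) * (q + r) := by rw [hr, hq, hp]; ring
  have e2 : v - v ^ 2 = (c + q) * (p + r) := by rw [hr, hq, hp]; ring
  have e3 : c - u * v = c * r - p * q := by rw [hr, hq, hp]; ring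
  rw [e1, e2, e3]
  have m1 : 0 ≤ c * r := by positivity
  have m2 : 0 ≤ p * q := by positivity
  have : 0 ≤ c * q * p + c * q * r + c * c * p + c * p * r := by positivity
  have n1 : c * r ≤ (c + p) * (p + r) := by nlinarith [mul_nonneg h0 hp0, mul_nonneg hp0 hr0]
  have n2 : c * r ≤ (c + q) * (q + r) := by nlinarith [mul_nonneg h0 hq0, mul_nonneg hq0 hr0]
  have : (c * r - p * q) ^ 2 + 2 * (c * r) * (p * q) ≤ (c + p) * (q + r) * ((c + q) * (p + r)) := by
    have : 0 ≤ (c + p) * (q + r) * ((c + q) * (p + r)) - ((c * r) ^ 2 + (p * q) ^ 2) := by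
      ring_nf
      positivity
    nlinarith
  nlinarith [mul_nonneg m1 m2]

lemma pos_of_sq {L r e : ℝ} (hL : 0 < L) (h : r ^ 2 ≤ L * e) : 0 ≤ e :=
  le_of_mul_le_mul_left (by linarith [sq_nonneg r]) hL

/-- Normalised reduction. -/
lemma core {x1 x2 X11 c X22 L1 L2 a1 a2 β1 β2 : ℝ}
    (hX1 : X11 ≤ x1) (hX2 : X22 ≤ x2) (hc0 : 0 ≤ c) (hc1 : c ≤ x1 - a1) (hc2 : c ≤ x2 - a2)
    (hc3 : (x1 - a1) + (x2 - a2) - 1 ≤ c)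
    (ha1 : 0 ≤ a1) (ha1' : a1 ≤ L1) (ha2 : 0 ≤ a2) (ha2' : a2 ≤ L2)
    (hβ1 : L1 * β1 = a1 ^ 2) (hβ2 : L2 * β2 = a2 ^ 2) (hβ1' : β1 ≤ a1) (hβ2' : β2 ≤ a2)
    (hβ1n : 0 ≤ β1) (hβ2n : 0 ≤ β2)
    (ht : (x1 - a1) ^ 2 ≤ X11 - β1) (hs : (x2 - a2) ^ 2 ≤ X22 - β2)
    (hd : (c - (x1 - a1) * (x2 - a2)) ^ 2 ≤
      (X11 - β1 - (x1 - a1) ^ 2) * (X22 - β2 - (x2 - a2) ^ 2)) :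
    ∃ a1 a2 b1 b2, 0 ≤ a1 ∧ 0 ≤ b1 ∧ a1 ^ 2 ≤ L1 * b1 ∧ b1 ≤ a1 ∧
      0 ≤ a2 ∧ 0 ≤ b2 ∧ a2 ^ 2 ≤ L2 * b2 ∧ b2 ≤ a2 ∧
      Hs (x1 - a1) (x2 - a2) (X11 - b1) c (X22 - b2) 1 1 1 := by
  rcases le_or_gt (X11 - β1) (x1 - a1) with h1 | h1 <;>
  rcases le_or_gt (X22 - β2) (x2 - a2) with h2 | h2
  · exact ⟨a1, a2, β1, β2, ha1, hβ1n, hβ1.ge, hβ1', ha2, hβ2n, hβ2.ge, hβ2',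
      Hs_box hc0 hc1 hc2 hc3 ht h1 hs h2 hd⟩
  · have hL : 0 < L2 := by
      rcases eq_or_lt_of_le (ha2.trans ha2') with h | h
      · exfalso; linarith
      · exact h
    obtain ⟨v, v1, v2, v3, v4, v5, v6⟩ := move (a := x1 - a1) (t := X11 - β1) (c := c)
      (u := x2 - a2) (x := x2) (X := X22) (L := L2) ht h1 hc0 hc1 hc2 (by linarith) hL
      (by linarith) (by linarith) hX2 (by linarith [mul_lt_mul_of_pos_left h2 hL])
      (by
        have e : L2 * X22 - (x2 - (x2 - a2)) ^ 2 - L2 * (x2 - a2) ^ 2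
          = L2 * (X22 - β2 - (x2 - a2) ^ 2) := by linarith
        rw [e]
        have := mul_le_mul_of_nonneg_left hd hL.le
        linarith)
    refine ⟨a1, x2 - v, β1, X22 - v, ha1, hβ1n, hβ1.ge, hβ1', v1,
      pos_of_sq hL v3, v3, by linarith, ?_⟩
    have e1 : x2 - (x2 - v) = v := by ring
    have e2 : X22 - (X22 - v) = v := by ring
    rw [e1, e2]
    exact Hs_box hc0 hc1 v4 (by linarith) ht h1 (sq_le_of_unit (by linarith) (by linarith)) le_rfl v6
  · have hL : 0 < L1 := by
      rcases eq_or_lt_of_le (ha1.trans ha1') with h | h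
      · exfalso; linarith
      · exact h
    obtain ⟨v, v1, v2, v3, v4, v5, v6⟩ := move (a := x2 - a2) (t := X22 - β2) (c := c)
      (u := x1 - a1) (x := x1) (X := X11) (L := L1) hs h2 hc0 hc2 hc1 (by linarith) hL
      (by linarith) (by linarith) hX1 (by linarith [mul_lt_mul_of_pos_left h1 hL])
      (by
        have e : L1 * X11 - (x1 - (x1 - a1)) ^ 2 - L1 * (x1 - a1) ^ 2
          = L1 * (X11 - β1 - (x1 - a1) ^ 2) := by linarith
        rw [e]
        have := mul_le_mul_of_nonneg_left hd hL.le
        linarith)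
    refine ⟨x1 - v, a2, X11 - v, β2, v1, pos_of_sq hL v3, v3, by linarith, ha2, hβ2n,
      hβ2.ge, hβ2', ?_⟩
    have e1 : x1 - (x1 - v) = v := by ring
    have e2 : X11 - (X11 - v) = v := by ring
    rw [e1, e2]
    refine Hs_box hc0 v4 hc2 (by linarith) (sq_le_of_unit (by linarith) (by linarith)) le_rfl hs h2 ?_
    rw [mul_comm v, mul_comm (v - v ^ 2)]
    exact v6
  · refine ⟨a1, a2, X11 - (x1 - a1), X22 - (x2 - a2), ha1, by linarith, ?_,
      by linarith, ha2, by linarith, ?_,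
      by linarith, ?_⟩
    · rw [← hβ1]; exact mul_le_mul_of_nonneg_left (by linarith) (by linarith)
    · rw [← hβ2]; exact mul_le_mul_of_nonneg_left (by linarith) (by linarith)
    · rw [sub_sub_cancel, sub_sub_cancel]
      exact Hs_box hc0 hc1 hc2 hc3 (sq_le_of_unit (by linarith) (by linarith)) le_rfl
        (sq_le_of_unit (by linarith) (by linarith)) le_rfl
        (corner_det hc0 hc1 hc2 hc3)

lemma P5_iff {x1 x2 X11 X12 X22 y1 y2 Y12 a1 a2 : ℝ} :
    P5cond x1 x2 X11 X12 X22 y1 y2 Y12 a1 a2 ↔ ∀ z1 z2 z3 z4 z5 : ℝ,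
      0 ≤ (y1 - Y12) * z1 ^ 2 + (y2 - Y12) * z2 ^ 2 + Y12 * z3 ^ 2 + X11 * z4 ^ 2 + X22 * z5 ^ 2
        + 2 * (a1 * (z1 * z4) + a2 * (z2 * z5) + (x1 - a1) * (z3 * z4) + (x2 - a2) * (z3 * z5)
          + X12 * (z4 * z5)) := by
  unfold P5cond
  constructor
  · intro h z1 z2 z3 z4 z5
    have := h.dotProduct_mulVec_nonneg ![z1, z2, z3, z4, z5]
    simp [Matrix.mulVec, dotProduct, Fin.sum_univ_succ] at this
    linarith
  · intro h
    refine Matrix.PosSemidef.of_dotProduct_mulVec_nonneg ?_ ?_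
    · ext i j
      fin_cases i <;> fin_cases j <;> simp
    · intro z
      have := h (z 0) (z 1) (z 2) (z 3) (z 4)
      simp [Matrix.mulVec, dotProduct, Fin.sum_univ_succ]
      have e1 : (Fin.succ 2 : Fin 4).succ = (4 : Fin 5) := rfl
      have e2 : (Fin.succ 2 : Fin 4) = 3 := rfl
      have e3 : (Fin.succ 2 : Fin 5) = 3 := rfl
      try simp only [e1]
      try simp only [e3]
      linarith

lemma comb_le {a b f g f' g' : ℝ} (ha : 0 ≤ a) (hb : 0 ≤ b) (h : f ≤ g) (h' : f' ≤ g') :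
    a * f + b * f' ≤ a * g + b * g' :=
  add_le_add (mul_le_mul_of_nonneg_left h ha) (mul_le_mul_of_nonneg_left h' hb)

lemma L_iff {x1 x2 X11 X12 X22 y1 y2 Y12 a1 a2 : ℝ} :
    Lcond x1 x2 X11 X12 X22 y1 y2 Y12 a1 a2 ↔
      X11 ≤ x1 ∧ x1 ≤ y1 ∧ X22 ≤ x2 ∧ x2 ≤ y2 ∧
      0 ≤ X12 ∧ x1 - a1 + x2 - a2 - Y12 ≤ X12 ∧ X12 ≤ x1 - a1 ∧ X12 ≤ x2 - a2 ∧
      0 ≤ a1 ∧ a1 ≤ y1 - Y12 ∧ 0 ≤ a2 ∧ a2 ≤ y2 - Y12 ∧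
      0 ≤ Y12 ∧ y1 + y2 - 1 ≤ Y12 ∧ Y12 ≤ y1 ∧ Y12 ≤ y2 := by
  unfold Lcond
  simp only [max_le_iff, le_min_iff, and_assoc]

lemma L_comb {x1 x2 X11 X12 X22 y1 y2 Y12 a1 a2 x1' x2' X11' X12' X22' y1' y2' Y12' a1' a2' : ℝ}
    (h : Lcond x1 x2 X11 X12 X22 y1 y2 Y12 a1 a2)
    (h' : Lcond x1' x2' X11' X12' X22' y1' y2' Y12' a1' a2')
    {a b : ℝ} (ha : 0 ≤ a) (hb : 0 ≤ b) (hab : a + b = 1) :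
    Lcond (a * x1 + b * x1') (a * x2 + b * x2') (a * X11 + b * X11') (a * X12 + b * X12')
      (a * X22 + b * X22') (a * y1 + b * y1') (a * y2 + b * y2') (a * Y12 + b * Y12')
      (a * a1 + b * a1') (a * a2 + b * a2') := by
  rw [L_iff] at *
  obtain ⟨h1, h2, h3, h4, h5, h6, h7, h8, h9, h10, h11, h12, h13, h14, h15, h16⟩ := h
  obtain ⟨k1, k2, k3, k4, k5, k6, k7, k8, k9, k10, k11, k12, k13, k14, k15, k16⟩ := h'
  refine ⟨comb_le ha hb h1 k1, comb_le ha hb h2 k2, comb_le ha hb h3 k3, comb_le ha hb h4 k4,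
    ?_, ?_, ?_, ?_, ?_, ?_, ?_, ?_, ?_, ?_, comb_le ha hb h15 k15, comb_le ha hb h16 k16⟩
  · linarith [comb_le ha hb h5 k5]
  · linarith [comb_le ha hb h6 k6]
  · linarith [comb_le ha hb h7 k7]
  · linarith [comb_le ha hb h8 k8]
  · linarith [comb_le ha hb h9 k9]
  · linarith [comb_le ha hb h10 k10]
  · linarith [comb_le ha hb h11 k11]
  · linarith [comb_le ha hb h12 k12]
  · linarith [comb_le ha hb h13 k13]
  · linarith [comb_le ha hb h14 k14]

lemma P5_comb {x1 x2 X11 X12 X22 y1 y2 Y12 a1 a2 x1' x2' X11' X12' X22' y1' y2' Y12' a1' a2' : ℝ}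
    (h : P5cond x1 x2 X11 X12 X22 y1 y2 Y12 a1 a2)
    (h' : P5cond x1' x2' X11' X12' X22' y1' y2' Y12' a1' a2')
    {a b : ℝ} (ha : 0 ≤ a) (hb : 0 ≤ b) :
    P5cond (a * x1 + b * x1') (a * x2 + b * x2') (a * X11 + b * X11') (a * X12 + b * X12')
      (a * X22 + b * X22') (a * y1 + b * y1') (a * y2 + b * y2') (a * Y12 + b * Y12')
      (a * a1 + b * a1') (a * a2 + b * a2') := by
  rw [P5_iff] at *
  intro z1 z2 z3 z4 z5
  linarith [comb_le ha hb (h z1 z2 z3 z4 z5) (h' z1 z2 z3 z4 z5)]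

lemma gen_ok {x1 x2 y1 y2 : ℝ} (h1 : 0 ≤ x1) (h2 : 0 ≤ x2) (h3 : x1 ≤ y1) (h4 : x2 ≤ y2)
    (h5 : y1 = 0 ∨ y1 = 1) (h6 : y2 = 0 ∨ y2 = 1) :
    Lcond x1 x2 (x1 * x1) (x1 * x2) (x2 * x2) y1 y2 (y1 * y2) (x1 * (1 - y2)) (x2 * (1 - y1)) ∧
    P5cond x1 x2 (x1 * x1) (x1 * x2) (x2 * x2) y1 y2 (y1 * y2)
      (x1 * (1 - y2)) (x2 * (1 - y1)) := by
  rw [L_iff, P5_iff]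
  rcases h5 with rfl | rfl <;> rcases h6 with rfl | rfl
  · obtain rfl : x1 = 0 := le_antisymm h3 h1
    obtain rfl : x2 = 0 := le_antisymm h4 h2
    norm_num
  · obtain rfl : x1 = 0 := le_antisymm h3 h1
    refine ⟨by norm_num; (repeat' apply And.intro) <;> nlinarith, ?_⟩
    intro z1 z2 z3 z4 z5
    nlinarith [sq_nonneg (z2 + x2 * z5)]
  · obtain rfl : x2 = 0 := le_antisymm h4 h2
    refine ⟨by norm_num; (repeat' apply And.intro) <;> nlinarith, ?_⟩
    intro z1 z2 z3 z4 z5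
    nlinarith [sq_nonneg (z1 + x1 * z4)]
  · refine ⟨⟨by nlinarith, by linarith, by nlinarith, by linarith, by positivity, by nlinarith,
      by nlinarith, by nlinarith, by linarith, by linarith, by linarith, by linarith, by linarith,
      by linarith, by linarith, by linarith⟩, ?_⟩
    intro z1 z2 z3 z4 z5
    nlinarith [sq_nonneg (z3 + x1 * z4 + x2 * z5)]

lemma Hs_comb4 {p1 p2 P11 P12 P22 r1 r2 R p1' p2' P11' P12' P22' r1' r2' R'
    q1 q2 Q11 Q12 Q22 s1 s2 S q1' q2' Q11' Q12' Q22' s1' s2' S' : ℝ}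
    (h1 : Hs p1 p2 P11 P12 P22 r1 r2 R) (h2 : Hs p1' p2' P11' P12' P22' r1' r2' R')
    (h3 : Hs q1 q2 Q11 Q12 Q22 s1 s2 S) (h4 : Hs q1' q2' Q11' Q12' Q22' s1' s2' S')
    {a b c d : ℝ} (ha : 0 ≤ a) (hb : 0 ≤ b) (hc : 0 ≤ c) (hd : 0 ≤ d) (hs : a + b + c + d = 1) :
    Hs (a * p1 + b * p1' + c * q1 + d * q1') (a * p2 + b * p2' + c * q2 + d * q2')
      (a * P11 + b * P11' + c * Q11 + d * Q11') (a * P12 + b * P12' + c * Q12 + d * Q12')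
      (a * P22 + b * P22' + c * Q22 + d * Q22') (a * r1 + b * r1' + c * s1 + d * s1')
      (a * r2 + b * r2' + c * s2 + d * s2') (a * R + b * R' + c * S + d * S') := by
  have key := (convex_convexHull ℝ _).sum_mem (t := Finset.univ) (w := ![a, b, c, d])
    (z := ![((![p1, p2], !![P11, P12; P12, P22], ![r1, r2], R) :
        (Fin 2 → ℝ) × Matrix (Fin 2) (Fin 2) ℝ × (Fin 2 → ℝ) × ℝ),
      (![p1', p2'], !![P11', P12'; P12', P22'], ![r1', r2'], R'),
      (![q1, q2], !![Q11, Q12; Q12, Q22], ![s1, s2], S),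
      (![q1', q2'], !![Q11', Q12'; Q12', Q22'], ![s1', s2'], S')])
    (by intro i _; fin_cases i <;> simp [ha, hb, hc, hd])
    (by simp [Fin.sum_univ_four, hs])
    (by
      intro i _
      fin_cases i
      · exact h1
      · exact h2
      · exact h3
      · exact h4)
  unfold Hs Hset
  convert key using 1
  simp only [Fin.sum_univ_four, Matrix.cons_val, Prod.smul_mk, Prod.mk_add_mk, Prod.mk.injEq]
  refine ⟨?_, ?_, ?_, ?_⟩
  · ext i; fin_cases i <;> simp
  · ext i j; fin_cases i <;> fin_cases j <;> simp
  · ext i; fin_cases i <;> simp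
  · simp

lemma piece {l a b : ℝ} (hl : 0 ≤ l) (ha : 0 ≤ a) (hb : 0 ≤ b) (h : a ^ 2 ≤ l * b) (hba : b ≤ a) :
    ∃ m s, l * m = a ∧ l * s = b ∧ 0 ≤ m ∧ m ^ 2 ≤ s ∧ s ≤ m := by
  rcases eq_or_lt_of_le hl with h0 | h0
  · subst h0
    have : a = 0 := by nlinarith
    exact ⟨0, 0, by linarith, by linarith, le_rfl, by norm_num, le_rfl⟩
  · refine ⟨a / l, b / l, by field_simp, by field_simp, by positivity, ?_, ?_⟩
    · rw [div_pow, div_le_div_iff₀ (by positivity) h0]; nlinarith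
    · gcongr

lemma assemble {l1 l2 Y u v t c s a1 b1 a2 b2 : ℝ} (hl1 : 0 ≤ l1) (hl2 : 0 ≤ l2) (hY : 0 ≤ Y)
    (hsum : l1 + l2 + Y ≤ 1) (H : Hs u v t c s 1 1 1)
    (ha1 : 0 ≤ a1) (hb1 : 0 ≤ b1) (h1 : a1 ^ 2 ≤ l1 * b1) (h1' : b1 ≤ a1)
    (ha2 : 0 ≤ a2) (hb2 : 0 ≤ b2) (h2 : a2 ^ 2 ≤ l2 * b2) (h2' : b2 ≤ a2) :
    Hs (Y * u + a1) (Y * v + a2) (Y * t + b1) (Y * c) (Y * s + b2) (Y + l1) (Y + l2) Y := by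
  obtain ⟨m, σ, e1, e2, m0, m1, m2⟩ := piece hl1 ha1 hb1 h1 h1'
  obtain ⟨n, τ, e3, e4, n0, n1, n2⟩ := piece hl2 ha2 hb2 h2 h2'
  have := Hs_comb4 H (Hs_10 m0 m1 m2) (Hs_01 n0 n1 n2) Hs_00 hY hl1 hl2
    (show 0 ≤ 1 - Y - l1 - l2 by linarith) (by ring)
  rw [← e1, ← e2, ← e3, ← e4]
  convert this using 1 <;> ring

lemma exists_ratio {l a : ℝ} (ha : 0 ≤ a) (hal : a ≤ l) : ∃ m, l * m = a ∧ 0 ≤ m ∧ m ≤ 1 := by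
  rcases eq_or_lt_of_le (ha.trans hal) with h | h
  · exact ⟨0, by linarith, le_rfl, by norm_num⟩
  · exact ⟨a / l, by field_simp, by positivity, by rw [div_le_one h]; exact hal⟩

lemma lin_zero {t u : ℝ} (hu : 0 ≤ u) (h : ∀ z : ℝ, 0 ≤ t + 2 * u * z) : u = 0 := by
  rcases eq_or_lt_of_le hu with h0 | h0
  · exact h0.symm
  · exfalso
    have := h (-(t + 1) / (2 * u))
    rw [mul_div_cancel₀ _ (by positivity)] at this
    linarith

lemma final {x1 x2 X11 X12 X22 y1 y2 Y a1 a2 : ℝ}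
    (hL : Lcond x1 x2 X11 X12 X22 y1 y2 Y a1 a2) (hP : P5cond x1 x2 X11 X12 X22 y1 y2 Y a1 a2) :
    Hs x1 x2 X11 X12 X22 y1 y2 Y := by
  rw [L_iff] at hL
  rw [P5_iff] at hP
  obtain ⟨h1, h2, h3, h4, h5, h6, h7, h8, h9, h10, h11, h12, h13, h14, h15, h16⟩ := hL
  obtain ⟨l1, hl1⟩ : ∃ l, l = y1 - Y := ⟨_, rfl⟩
  obtain ⟨l2, hl2⟩ : ∃ l, l = y2 - Y := ⟨_, rfl⟩
  rw [← hl1] at h10 hP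
  rw [← hl2] at h12 hP
  obtain ⟨m, em, m0, m1⟩ := exists_ratio h9 h10
  obtain ⟨n, en, n0, n1⟩ := exists_ratio h11 h12
  have Q : ∀ z3 z4 z5 : ℝ, 0 ≤ Y * z3 ^ 2 + (X11 - a1 * m) * z4 ^ 2 + (X22 - a2 * n) * z5 ^ 2
      + 2 * ((x1 - a1) * (z3 * z4) + (x2 - a2) * (z3 * z5) + X12 * (z4 * z5)) := by
    intro z3 z4 z5
    have := hP (-(m * z4)) (-(n * z5)) z3 z4 z5
    have e1 : l1 * (-(m * z4)) ^ 2 = a1 * m * z4 ^ 2 := by rw [← em]; ring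
    have e2 : l2 * (-(n * z5)) ^ 2 = a2 * n * z5 ^ 2 := by rw [← en]; ring
    rw [e1, e2] at this
    linarith
  have ey1 : y1 = Y + l1 := by linarith
  have ey2 : y2 = Y + l2 := by linarith
  have hβ1 : 0 ≤ a1 * m := by positivity
  have hβ2 : 0 ≤ a2 * n := by positivity
  rcases eq_or_lt_of_le h13 with hY | hY
  · have u1 : x1 - a1 = 0 := by
      refine lin_zero (t := X11 - a1 * m) (by linarith) fun z => ?_
      have := Q z 1 0
      rw [← hY] at this
      linarith
    have u2 : x2 - a2 = 0 := by
      refine lin_zero (t := X22 - a2 * n) (by linarith) fun z => ?_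
      have := Q z 0 1
      rw [← hY] at this
      linarith
    have t1 : a1 * m ≤ X11 := by linarith [Q 0 1 0]
    have t2 : a2 * n ≤ X22 := by linarith [Q 0 0 1]
    have := assemble (l1 := l1) (l2 := l2) (Y := Y) (a1 := a1) (b1 := X11) (a2 := a2) (b2 := X22)
      (by linarith) (by linarith) h13
      (by linarith) (Hs_pt (u := 0) (v := 0) le_rfl zero_le_one le_rfl zero_le_one)
      h9 (by linarith) (by
        have e : a1 ^ 2 = l1 * (a1 * m) := by rw [pow_two]; nth_rewrite 1 [← em]; ring
        rw [e]; exact mul_le_mul_of_nonneg_left t1 (by linarith)) (by linarith)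
      h11 (by linarith) (by
        have e : a2 ^ 2 = l2 * (a2 * n) := by rw [pow_two]; nth_rewrite 1 [← en]; ring
        rw [e]; exact mul_le_mul_of_nonneg_left t2 (by linarith)) (by linarith)
    have eX : X12 = 0 := by linarith
    have ex1 : x1 = a1 := by linarith
    have ex2 : x2 = a2 := by linarith
    rw [ey1, ey2, eX, ex1, ex2]
    convert this using 1 <;> ring
  ·
    have nz : ∀ r : ℝ, ∃ r', r = Y * r' := fun r => ⟨r / Y, by field_simp⟩
    obtain ⟨x1, rfl⟩ := nz x1
    obtain ⟨x2, rfl⟩ := nz x2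
    obtain ⟨X11, rfl⟩ := nz X11
    obtain ⟨c, rfl⟩ := nz X12
    obtain ⟨X22, rfl⟩ := nz X22
    obtain ⟨a1, rfl⟩ := nz a1
    obtain ⟨a2, rfl⟩ := nz a2
    obtain ⟨L1, rfl⟩ := nz l1
    obtain ⟨L2, rfl⟩ := nz l2
    have N : ∀ {f g : ℝ}, Y * f ≤ Y * g → f ≤ g := fun h => le_of_mul_le_mul_left h hY
    have E1 : L1 * m = a1 := mul_left_cancel₀ hY.ne' (by linarith)
    have E2 : L2 * n = a2 := mul_left_cancel₀ hY.ne' (by linarith)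
    have A1 : 0 ≤ a1 := N (by linarith)
    have A2 : 0 ≤ a2 := N (by linarith)
    have Q' : ∀ z3 z4 z5 : ℝ, 0 ≤ z3 ^ 2 + (X11 - a1 * m) * z4 ^ 2 + (X22 - a2 * n) * z5 ^ 2
        + 2 * ((x1 - a1) * (z3 * z4) + (x2 - a2) * (z3 * z5) + c * (z4 * z5)) := by
      intro z3 z4 z5
      exact N (by linarith [Q z3 z4 z5])
    have D := discrim_le_zero (a := X11 - a1 * m - (x1 - a1) ^ 2)
      (b := 2 * (c - (x1 - a1) * (x2 - a2))) (c := X22 - a2 * n - (x2 - a2) ^ 2) (by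
        intro z
        have := Q' (-((x1 - a1) * z + (x2 - a2))) z 1
        linarith)
    unfold discrim at D
    obtain ⟨b1, b2, d1, d2, r1, r2, r3, r4, r5, r6, r7, r8, r9⟩ :=
      core (x1 := x1) (x2 := x2) (X11 := X11) (c := c) (X22 := X22) (L1 := L1) (L2 := L2)
        (a1 := a1) (a2 := a2) (β1 := a1 * m) (β2 := a2 * n)
        (N h1) (N h3) (N (by linarith)) (N (by linarith)) (N (by linarith)) (N (by linarith))
        A1 (N h10) A2 (N h12)
        (by rw [← mul_assoc, mul_comm L1, mul_assoc, E1]; ring)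
        (by rw [← mul_assoc, mul_comm L2, mul_assoc, E2]; ring)
        (mul_le_of_le_one_right A1 m1) (mul_le_of_le_one_right A2 n1)
        (mul_nonneg A1 m0) (mul_nonneg A2 n0)
        (by linarith [Q' (-(x1 - a1)) 1 0]) (by linarith [Q' (-(x2 - a2)) 0 1]) (by linarith)
    have Y2 : 0 ≤ Y ^ 2 := by positivity
    have := assemble (l1 := Y * L1) (l2 := Y * L2) (Y := Y) (a1 := Y * b1) (b1 := Y * d1)
      (a2 := Y * b2) (b2 := Y * d2) (by linarith) (by linarith) h13 (by linarith) r9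
      (by positivity) (by positivity) (by linarith [mul_le_mul_of_nonneg_left r3 Y2])
      (mul_le_mul_of_nonneg_left r4 h13)
      (by positivity) (by positivity) (by linarith [mul_le_mul_of_nonneg_left r7 Y2])
      (mul_le_mul_of_nonneg_left r8 h13)
    rw [ey1, ey2]
    convert this using 1 <;> ring

/-- 𝓗 equals the projection onto (x, X, y, Y₁₂) of the points (x, X, y, Y₁₂, α)
satisfying (L) and the single PSD condition (P5). -/
theorem stmt14 :
    Hset = {p : (Fin 2 → ℝ) × Matrix (Fin 2) (Fin 2) ℝ × (Fin 2 → ℝ) × ℝ |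
      p.2.1.IsSymm ∧ ∃ a : Fin 2 → ℝ,
        Lcond (p.1 0) (p.1 1) (p.2.1 0 0) (p.2.1 0 1) (p.2.1 1 1)
          (p.2.2.1 0) (p.2.2.1 1) p.2.2.2 (a 0) (a 1) ∧
        P5cond (p.1 0) (p.1 1) (p.2.1 0 0) (p.2.1 0 1) (p.2.1 1 1)
          (p.2.2.1 0) (p.2.2.1 1) p.2.2.2 (a 0) (a 1)} := by
  apply Set.Subset.antisymm
  · refine convexHull_min ?_ ?_
    · rintro p ⟨x, y, h1, h2, h3, rfl⟩
      refine ⟨?_, ![x 0 * (1 - y 1), x 1 * (1 - y 0)], ?_⟩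
      · ext i j
        simp [Matrix.vecMulVec_apply, mul_comm]
      · have := gen_ok (h1 0) (h1 1) (h2 0) (h2 1) (h3 0) (h3 1)
        simpa [Matrix.vecMulVec_apply] using this
    · rintro p ⟨hp, α, hpL, hpP⟩ q ⟨hq, β, hqL, hqP⟩ a b ha hb hab
      refine ⟨?_, a • α + b • β, ?_, ?_⟩
      · have := (hp.smul a).add (hq.smul b)
        simpa using this
      · simpa using L_comb hpL hqL ha hb hab
      · simpa using P5_comb hpP hqP ha hb
  · rintro ⟨x, X, y, Y⟩ ⟨hs, α, hL, hP⟩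
    have := final hL hP
    unfold Hs at this
    convert this using 2
    · ext i; fin_cases i <;> rfl
    · congr 1
      · ext i j
        have := hs.apply 0 1
        fin_cases i <;> fin_cases j <;> simp_all
      · congr 1
        ext i; fin_cases i <;> rfl
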